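/- Assume λ_n = 1, a_n ≠ 0 with ε = |a_n|², and that H_search admits an orthonormal eigenbasis ψ_1,…,ψ_n with real eigenvalues E_1 ≤ … ≤ E_n such that E_α ≠ r·λ_i for all α and i, E_α < r for every α < n, and E_n > r. Set δ₊ = E_n − r. Then for every t ∈ ℝ, |⟨w, exp(−i t H_search) v_n⟩| ≤ 2δ₊/√ε − √ε. -/

import Mathlib

open Matrix BigOperators

/-!
Let `v` be a unit eigenvector of a symmetric `A` with eigenvalue `μ`, and let `ψ` be an orthonormal
eigenbasis of `A + |w⟩⟨w|` with eigenvalues `E`. Pairing `v` with the eigenvalue equation of `ψ α`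
gives `⟨v, w⟩⟨w, ψ α⟩⟨ψ α, v⟩ = (E α - μ)|⟨ψ α, v⟩|²`. Write `x α` for this real number.

By completeness the `x α` add up to `|⟨v, w⟩|²`. Under an evolution that multiplies each `ψ α` by
a phase, the amplitude at `w` times `|⟨v, w⟩|` is at most `∑ |x α|`. If only one `x k` is positive,
then `∑ |x α| = 2 x k - ∑ x α ≤ 2 (E k - μ) - |⟨v, w⟩|²`.
-/

section AbsoluteSum

variable {ι R : Type*} [Fintype ι] [Ring R] [LinearOrder R] [IsOrderedRing R]

theorem sum_abs_eq_two_mul_sub_sum {x : ι → R} {k : ι} (hk : 0 ≤ x k)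
    (hne : ∀ i, i ≠ k → x i ≤ 0) : ∑ i, |x i| = 2 * x k - ∑ i, x i := by
  classical
  have sum_abs_erase : ∑ i ∈ Finset.univ.erase k, |x i| = -∑ i ∈ Finset.univ.erase k, x i := by
    rw [← Finset.sum_neg_distrib]
    exact Finset.sum_congr rfl fun i hi => abs_of_nonpos (hne i (Finset.ne_of_mem_erase hi))
  rw [← Finset.add_sum_erase _ _ (Finset.mem_univ k), sum_abs_erase, abs_of_nonneg hk,
    ← Finset.add_sum_erase _ x (Finset.mem_univ k), two_mul]
  abel

end AbsoluteSum

section RankOnePerturbation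

variable {𝕜 F ι : Type*} [RCLike 𝕜] [NormedAddCommGroup F] [InnerProductSpace 𝕜 F]
  {A : F →ₗ[𝕜] F} {v w : F} {μ : ℝ}

open scoped InnerProductSpace

theorem sub_mul_inner_eq_inner_mul_inner (hA : A.IsSymmetric) (hv : A v = (μ : 𝕜) • v)
    {φ : F} {e : 𝕜} (hφ : A φ + ⟪w, φ⟫_𝕜 • w = e • φ) :
    (e - μ) * ⟪v, φ⟫_𝕜 = ⟪v, w⟫_𝕜 * ⟪w, φ⟫_𝕜 := by
  have inner_apply : ⟪v, A φ⟫_𝕜 = μ * ⟪v, φ⟫_𝕜 := by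
    rw [← hA, hv, inner_smul_left, RCLike.conj_ofReal]
  have paired := congrArg (fun y => ⟪v, y⟫_𝕜) hφ
  simp only [inner_add_right, inner_smul_right, inner_apply] at paired
  linear_combination -paired

theorem inner_mul_inner_mul_inner_eq_sub_mul_norm_sq (hA : A.IsSymmetric) (hv : A v = (μ : 𝕜) • v)
    {φ : F} {e : ℝ} (hφ : A φ + ⟪w, φ⟫_𝕜 • w = (e : 𝕜) • φ) :
    ⟪v, w⟫_𝕜 * (⟪w, φ⟫_𝕜 * ⟪φ, v⟫_𝕜) = (((e - μ) * ‖⟪φ, v⟫_𝕜‖ ^ 2 : ℝ) : 𝕜) := by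
  rw [← mul_assoc, ← sub_mul_inner_eq_inner_mul_inner hA hv hφ, mul_assoc,
    ← inner_conj_symm v φ, RCLike.conj_mul]
  push_cast
  rfl

variable [Fintype ι] {ψ : OrthonormalBasis ι 𝕜 F} {E : ι → ℝ}

theorem sum_sub_mul_norm_inner_sq (hA : A.IsSymmetric) (hv : A v = (μ : 𝕜) • v)
    (hψ : ∀ α, A (ψ α) + ⟪w, ψ α⟫_𝕜 • w = (E α : 𝕜) • ψ α) :
    ∑ α, (E α - μ) * ‖⟪ψ α, v⟫_𝕜‖ ^ 2 = ‖⟪v, w⟫_𝕜‖ ^ 2 := by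
  apply RCLike.ofReal_injective (K := 𝕜)
  calc ((∑ α, (E α - μ) * ‖⟪ψ α, v⟫_𝕜‖ ^ 2 : ℝ) : 𝕜)
      = ⟪v, w⟫_𝕜 * ∑ α, ⟪w, ψ α⟫_𝕜 * ⟪ψ α, v⟫_𝕜 := by
        rw [RCLike.ofReal_sum, Finset.mul_sum]
        exact Finset.sum_congr rfl fun α _ =>
          (inner_mul_inner_mul_inner_eq_sub_mul_norm_sq hA hv (hψ α)).symm
    _ = ((‖⟪v, w⟫_𝕜‖ ^ 2 : ℝ) : 𝕜) := by
        rw [ψ.sum_inner_mul_inner, ← inner_conj_symm w v, RCLike.mul_conj, RCLike.ofReal_pow]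

theorem inner_map_eq_sum_of_map_basis_eq_smul {U : F →ₗ[𝕜] F} {u : ι → 𝕜}
    (hU : ∀ α, U (ψ α) = u α • ψ α) (x y : F) :
    ⟪x, U y⟫_𝕜 = ∑ α, u α * (⟪x, ψ α⟫_𝕜 * ⟪ψ α, y⟫_𝕜) := by
  conv_lhs => rw [← ψ.sum_repr' y]
  simp only [map_sum, map_smul, hU, inner_sum, inner_smul_right]
  exact Finset.sum_congr rfl fun α _ => by ring

theorem norm_inner_mul_norm_inner_map_le_sum (hA : A.IsSymmetric) (hv : A v = (μ : 𝕜) • v)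
    (hψ : ∀ α, A (ψ α) + ⟪w, ψ α⟫_𝕜 • w = (E α : 𝕜) • ψ α)
    {U : F →ₗ[𝕜] F} {u : ι → 𝕜} (hU : ∀ α, U (ψ α) = u α • ψ α) (hu : ∀ α, ‖u α‖ ≤ 1) :
    ‖⟪v, w⟫_𝕜‖ * ‖⟪w, U v⟫_𝕜‖ ≤ ∑ α, |(E α - μ) * ‖⟪ψ α, v⟫_𝕜‖ ^ 2| := by
  calc ‖⟪v, w⟫_𝕜‖ * ‖⟪w, U v⟫_𝕜‖
      = ‖∑ α, u α * (((E α - μ) * ‖⟪ψ α, v⟫_𝕜‖ ^ 2 : ℝ) : 𝕜)‖ := by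
        rw [← norm_mul, inner_map_eq_sum_of_map_basis_eq_smul hU, Finset.mul_sum]
        simp only [mul_left_comm _ (u _),
          inner_mul_inner_mul_inner_eq_sub_mul_norm_sq hA hv (hψ _)]
    _ ≤ ∑ α, ‖u α * (((E α - μ) * ‖⟪ψ α, v⟫_𝕜‖ ^ 2 : ℝ) : 𝕜)‖ := norm_sum_le _ _
    _ ≤ ∑ α, |(E α - μ) * ‖⟪ψ α, v⟫_𝕜‖ ^ 2| := by
        refine Finset.sum_le_sum fun α _ => ?_
        rw [norm_mul, RCLike.norm_ofReal]
        exact mul_le_of_le_one_left (abs_nonneg _) (hu α)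

theorem norm_inner_mul_norm_inner_map_le (hA : A.IsSymmetric) (hv : A v = (μ : 𝕜) • v)
    (hψ : ∀ α, A (ψ α) + ⟪w, ψ α⟫_𝕜 • w = (E α : 𝕜) • ψ α)
    {k : ι} (hle : ∀ α, α ≠ k → E α ≤ μ) (hk : μ ≤ E k)
    {U : F →ₗ[𝕜] F} {u : ι → 𝕜} (hU : ∀ α, U (ψ α) = u α • ψ α) (hu : ∀ α, ‖u α‖ ≤ 1) :
    ‖⟪v, w⟫_𝕜‖ * ‖⟪w, U v⟫_𝕜‖ ≤ 2 * ((E k - μ) * ‖v‖ ^ 2) - ‖⟪v, w⟫_𝕜‖ ^ 2 := by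
  have hgap : 0 ≤ E k - μ := sub_nonneg.mpr hk
  have weight_nonneg : 0 ≤ (E k - μ) * ‖⟪ψ k, v⟫_𝕜‖ ^ 2 := mul_nonneg hgap (sq_nonneg _)
  have weight_nonpos (α : ι) (hα : α ≠ k) : (E α - μ) * ‖⟪ψ α, v⟫_𝕜‖ ^ 2 ≤ 0 :=
    mul_nonpos_of_nonpos_of_nonneg (sub_nonpos.mpr (hle α hα)) (sq_nonneg _)
  have norm_inner_le : ‖⟪ψ k, v⟫_𝕜‖ ≤ ‖v‖ := by simpa using norm_inner_le_norm (𝕜 := 𝕜) (ψ k) v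
  calc ‖⟪v, w⟫_𝕜‖ * ‖⟪w, U v⟫_𝕜‖
      ≤ ∑ α, |(E α - μ) * ‖⟪ψ α, v⟫_𝕜‖ ^ 2| :=
        norm_inner_mul_norm_inner_map_le_sum hA hv hψ hU hu
    _ = 2 * ((E k - μ) * ‖⟪ψ k, v⟫_𝕜‖ ^ 2) - ‖⟪v, w⟫_𝕜‖ ^ 2 := by
        rw [sum_abs_eq_two_mul_sub_sum (x := fun α => (E α - μ) * ‖⟪ψ α, v⟫_𝕜‖ ^ 2)
          weight_nonneg weight_nonpos, sum_sub_mul_norm_inner_sq hA hv hψ]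
    _ ≤ 2 * ((E k - μ) * ‖v‖ ^ 2) - ‖⟪v, w⟫_𝕜‖ ^ 2 := by gcongr

end RankOnePerturbation

section MatrixModel

variable {𝕜 ι : Type*} [RCLike 𝕜] [Fintype ι]

theorem inner_toLp_toLp_eq_star_dotProduct (x y : ι → 𝕜) :
    inner 𝕜 (WithLp.toLp 2 x) (WithLp.toLp 2 y) = star x ⬝ᵥ y := by
  rw [EuclideanSpace.inner_toLp_toLp, dotProduct_comm]

theorem norm_toLp_sq_eq_one {x : ι → 𝕜} (hx : star x ⬝ᵥ x = 1) : ‖WithLp.toLp 2 x‖ ^ 2 = 1 := by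
  rw [← inner_self_eq_norm_sq (𝕜 := 𝕜), inner_toLp_toLp_eq_star_dotProduct, hx, RCLike.one_re]

variable [DecidableEq ι]

open scoped Matrix.Norms.Operator in
theorem exp_mulVec_of_mulVec_eq_smul {M : Matrix ι ι 𝕜} {x : ι → 𝕜} {e : 𝕜}
    (hx : M *ᵥ x = e • x) : NormedSpace.exp M *ᵥ x = NormedSpace.exp e • x := by
  have pow_mulVec (m : ℕ) : (M ^ m) *ᵥ x = e ^ m • x := by
    induction m with
    | zero => simp
    | succ m ih => rw [pow_succ, ← mulVec_mulVec, hx, mulVec_smul, ih, smul_smul, pow_succ']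
  have matrix_series := (NormedSpace.exp_series_hasSum_exp' (𝕂 := 𝕜) M).map
    (mulVec.addMonoidHomLeft x) (continuous_id.matrix_mulVec continuous_const)
  have scalar_series := (NormedSpace.exp_series_hasSum_exp' (𝕂 := 𝕜) e).smul_const x
  refine matrix_series.unique (scalar_series.congr_fun fun m => ?_)
  simp [mulVec.addMonoidHomLeft, smul_mulVec, pow_mulVec, smul_smul]

theorem exists_orthonormalBasis_eq_toLp {ψ : ι → ι → 𝕜}
    (hψ : ∀ α β, star (ψ α) ⬝ᵥ ψ β = if α = β then 1 else 0) :
    ∃ b : OrthonormalBasis ι 𝕜 (EuclideanSpace 𝕜 ι), ∀ α, b α = WithLp.toLp 2 (ψ α) := by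
  have horthonormal : Orthonormal 𝕜 fun α => WithLp.toLp 2 (ψ α) :=
    orthonormal_iff_ite.mpr fun α β => by
      rw [inner_toLp_toLp_eq_star_dotProduct, hψ]
  have hspan := horthonormal.linearIndependent.span_eq_top_of_card_eq_finrank'
    finrank_euclideanSpace.symm
  exact ⟨.mk horthonormal hspan.ge, fun α => by rw [OrthonormalBasis.coe_mk]⟩

theorem toEuclideanLin_toLp_eq_smul {M : Matrix ι ι 𝕜} {x : ι → 𝕜} {e : 𝕜} (hx : M *ᵥ x = e • x) :
    toEuclideanLin M (WithLp.toLp 2 x) = e • WithLp.toLp 2 x := by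
  rw [toLpLin_toLp, toLin'_apply, hx, WithLp.toLp_smul]

theorem norm_dotProduct_mul_norm_dotProduct_mulVec_le {A B : Matrix ι ι 𝕜} {v w : ι → 𝕜} {μ : ℝ}
    (hA : A.IsHermitian) (hB : B = A + vecMulVec w (star w))
    (hv : A *ᵥ v = (μ : 𝕜) • v) (hv_unit : star v ⬝ᵥ v = 1) {ψ : ι → ι → 𝕜} {E : ι → ℝ}
    (hortho : ∀ α β, star (ψ α) ⬝ᵥ ψ β = if α = β then 1 else 0)
    (hψ : ∀ α, B *ᵥ ψ α = (E α : 𝕜) • ψ α)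
    {k : ι} (hle : ∀ α, α ≠ k → E α ≤ μ) (hk : μ ≤ E k)
    {U : Matrix ι ι 𝕜} {u : ι → 𝕜} (hU : ∀ α, U *ᵥ ψ α = u α • ψ α) (hu : ∀ α, ‖u α‖ ≤ 1) :
    ‖star v ⬝ᵥ w‖ * ‖star w ⬝ᵥ U *ᵥ v‖ ≤ 2 * (E k - μ) - ‖star v ⬝ᵥ w‖ ^ 2 := by
  obtain ⟨b, hb⟩ := exists_orthonormalBasis_eq_toLp hortho
  have hb_eigen (α : ι) : toEuclideanLin A (b α) +
      inner 𝕜 (WithLp.toLp 2 w) (b α) • WithLp.toLp 2 w = (E α : 𝕜) • b α := by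
    rw [hb, inner_toLp_toLp_eq_star_dotProduct, toLpLin_toLp, toLin'_apply, ← WithLp.toLp_smul,
      ← WithLp.toLp_smul, ← hψ, ← WithLp.toLp_add, hB, add_mulVec, vecMulVec_mulVec,
      op_smul_eq_smul]
  have hb_map (α : ι) : toEuclideanLin U (b α) = u α • b α := by
    rw [hb, toEuclideanLin_toLp_eq_smul (hU α)]
  have bound := norm_inner_mul_norm_inner_map_le (isSymmetric_toEuclideanLin_iff.mpr hA)
    (toEuclideanLin_toLp_eq_smul hv) hb_eigen hle hk hb_map hu
  rwa [toLpLin_toLp, toLin'_apply, inner_toLp_toLp_eq_star_dotProduct,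
    inner_toLp_toLp_eq_star_dotProduct, norm_toLp_sq_eq_one hv_unit, mul_one] at bound

end MatrixModel

theorem amplitude_upper_bound_above_general {ι : Type*} [Fintype ι] [DecidableEq ι]
    {A Hs : Matrix ι ι ℂ} {v w : ι → ℂ} {μ : ℝ}
    (hA : A.IsHermitian) (hHs : Hs = A + vecMulVec w (star w))
    (hv : A *ᵥ v = (μ : ℂ) • v) (hv_unit : star v ⬝ᵥ v = 1) (hvw : star v ⬝ᵥ w ≠ 0)
    {ψ : ι → ι → ℂ} {E : ι → ℝ}
    (hortho : ∀ α β, star (ψ α) ⬝ᵥ ψ β = if α = β then 1 else 0)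
    (hψ : ∀ α, Hs *ᵥ ψ α = (E α : ℂ) • ψ α)
    {k : ι} (hle : ∀ α, α ≠ k → E α ≤ μ) (hk : μ ≤ E k) (t : ℝ) :
    ‖star w ⬝ᵥ NormedSpace.exp (-(Complex.I * t) • Hs) *ᵥ v‖ ≤
      2 * (E k - μ) / ‖star v ⬝ᵥ w‖ - ‖star v ⬝ᵥ w‖ := by
  have evolution_eigen (α : ι) : NormedSpace.exp (-(Complex.I * t) • Hs) *ᵥ ψ α =
      Complex.exp (-(Complex.I * t) * E α) • ψ α := by
    rw [Complex.exp_eq_exp_ℂ]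
    exact exp_mulVec_of_mulVec_eq_smul (by rw [smul_mulVec, hψ, smul_smul])
  have norm_phase (α : ι) : ‖Complex.exp (-(Complex.I * t) * E α)‖ ≤ 1 := by
    simp [Complex.norm_exp]
  have bound := norm_dotProduct_mul_norm_dotProduct_mulVec_le hA hHs hv hv_unit hortho hψ hle hk
    evolution_eigen norm_phase
  rw [le_sub_iff_add_le, le_div_iff₀ (norm_pos_iff.mpr hvw)]
  linarith

/-- Assume `λ_n = 1`, `a_n ≠ 0` with `ε = |a_n|²`, and that
`H_search = r•H + |w⟩⟨w|` admits an orthonormal eigenbasis `ψ` with real eigenvalues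
`E 1 ≤ … ≤ E n` avoiding all `r·λ i`, with `E α < r` for `α < n` and `E n > r`. Setting
`δ₊ = E n − r`, for every `t ∈ ℝ` we have
`|⟨w, exp(−i t H_search) v_n⟩| ≤ 2δ₊/√ε − √ε`. -/
theorem amplitude_upper_bound_above
    (n : ℕ) (H : Matrix (Fin (n + 1)) (Fin (n + 1)) ℂ) (hH : H.IsHermitian)
    (v : Fin (n + 1) → (Fin (n + 1) → ℂ)) (lam : Fin (n + 1) → ℝ)
    (hlam : Monotone lam) (hlam0 : ∀ i, 0 ≤ lam i)
    (hlast : lam (Fin.last n) = 1)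
    (hlt : ∀ i, i ≠ Fin.last n → lam i < 1)
    (hortho : ∀ i j, star (v i) ⬝ᵥ v j = if i = j then 1 else 0)
    (heig : ∀ i, H.mulVec (v i) = (lam i : ℂ) • v i)
    (w : Fin (n + 1) → ℂ) (hw : star w ⬝ᵥ w = 1)
    (a : Fin (n + 1) → ℂ) (ha : ∀ i, a i = star (v i) ⬝ᵥ w)
    (han : a (Fin.last n) ≠ 0)
    (ε : ℝ) (hε : ε = ‖a (Fin.last n)‖ ^ 2)
    (r : ℝ)
    (Hs : Matrix (Fin (n + 1)) (Fin (n + 1)) ℂ)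
    (hHs : Hs = (r : ℂ) • H + Matrix.vecMulVec w (star w))
    (ψ : Fin (n + 1) → (Fin (n + 1) → ℂ)) (E : Fin (n + 1) → ℝ)
    (hE : Monotone E)
    (horthoψ : ∀ α β, star (ψ α) ⬝ᵥ ψ β = if α = β then 1 else 0)
    (heigψ : ∀ α, Hs.mulVec (ψ α) = (E α : ℂ) • ψ α)
    (hEne : ∀ α i, E α ≠ r * lam i)
    (hEltr : ∀ α, α ≠ Fin.last n → E α < r)
    (hEgt : r < E (Fin.last n))
    (δp : ℝ) (hδp : δp = E (Fin.last n) - r) :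
    ∀ t : ℝ,
      ‖star w ⬝ᵥ (NormedSpace.exp ((-(Complex.I * (t : ℂ))) • Hs)).mulVec (v (Fin.last n))‖ ≤
        2 * δp / Real.sqrt ε - Real.sqrt ε := by
  rw [hε, Real.sqrt_sq (norm_nonneg _), hδp, ha]
  exact amplitude_upper_bound_above_general (hH.smul (Complex.conj_ofReal r)) hHs
    (by rw [smul_mulVec, heig, hlast, Complex.ofReal_one, one_smul]) (by rw [hortho, if_pos rfl])
    (ha _ ▸ han) horthoψ heigψ (fun α hα => (hEltr α hα).le) hEgt.le
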